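/- Let S be a finite set, A a finite action set, R: S × A → [0,1] a bounded reward function, τ_a(·|s) probability distributions on S, and γ ∈ (0,1). Define T_K: 𝔐 → 𝔐 on 1-bounded pseudometrics by T_K(m)(x,y) = max_{a ∈ A} [ (1-γ)|R(x,a) - R(y,a)| + γ W₁(m)(τ_a(·|x), τ_a(·|y)) ], where W₁(m) is the Kantorovich (1-Wasserstein) distance induced by m. Then T_K is a γ-contraction with respect to Δ(m₁,m₂) = sup_{x,y}|m₁(x,y) - m₂(x,y)|, and hence has a unique fixed point in 𝔐. -/

import Mathlib

open Finset

/-- `m` is a 1-bounded pseudometric on `S`. -/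
def IsBddPseudometric {S : Type*} (m : S → S → ℝ) : Prop :=
  (∀ x y, 0 ≤ m x y) ∧ (∀ x y, m x y ≤ 1) ∧ (∀ x, m x x = 0) ∧
    (∀ x y, m x y = m y x) ∧ (∀ x y z, m x z ≤ m x y + m y z)

/-- `c` is a coupling of the distributions `μ` and `ν` on the finite set `S`. -/
def IsCoupling {S : Type*} [Fintype S] (c : S → S → ℝ) (μ ν : S → ℝ) : Prop :=
  (∀ x y, 0 ≤ c x y) ∧ (∀ x, ∑ y, c x y = μ x) ∧ (∀ y, ∑ x, c x y = ν y)

/-- The Kantorovich (1-Wasserstein) distance induced by a cost `m` between distributions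
`μ` and `ν` on a finite set: the infimum of the expected cost over couplings. -/
noncomputable def kantorovich {S : Type*} [Fintype S] (m : S → S → ℝ) (μ ν : S → ℝ) : ℝ :=
  sInf {v | ∃ c : S → S → ℝ, IsCoupling c μ ν ∧ v = ∑ x, ∑ y, c x y * m x y}

/-- The sup metric `Δ` on functions `S → S → ℝ`. -/
noncomputable def supDist {S : Type*} (m₁ m₂ : S → S → ℝ) : ℝ :=
  ⨆ p : S × S, |m₁ p.1 p.2 - m₂ p.1 p.2|

/-- The operator `T_K` of the bisimulation metric:
`T_K(m)(x,y) = max_a [(1-γ)|R(x,a)-R(y,a)| + γ W₁(m)(τ_a(·|x), τ_a(·|y))]`. -/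
noncomputable def TK {S A : Type*} [Fintype S] [Fintype A] [Nonempty A]
    (R : S → A → ℝ) (τ : A → S → S → ℝ) (γ : ℝ) (m : S → S → ℝ) : S → S → ℝ :=
  fun x y => univ.sup' univ_nonempty
    (fun a => (1 - γ) * |R x a - R y a| + γ * kantorovich m (τ a x) (τ a y))

theorem kant_le {S : Type*} [Fintype S] {m : S → S → ℝ} (hm : ∀ x y, 0 ≤ m x y) {μ ν : S → ℝ}
    {c : S → S → ℝ} (hc : IsCoupling c μ ν) :
    kantorovich m μ ν ≤ ∑ x, ∑ y, c x y * m x y := by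
  apply csInf_le
  · refine ⟨0, ?_⟩
    rintro v ⟨c, hc, rfl⟩
    exact sum_nonneg fun x _ => sum_nonneg fun y _ => mul_nonneg (hc.1 x y) (hm x y)
  · exact ⟨c, hc, rfl⟩

theorem le_kant {S : Type*} [Fintype S] {m : S → S → ℝ} {μ ν : S → ℝ}
    (hμ : ∀ x, 0 ≤ μ x) (hν : ∀ x, 0 ≤ ν x) (hμ1 : ∑ x, μ x = 1) (hν1 : ∑ x, ν x = 1) {b : ℝ}
    (h : ∀ c, IsCoupling c μ ν → b ≤ ∑ x, ∑ y, c x y * m x y) :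
    b ≤ kantorovich m μ ν := by
  apply le_csInf
  · refine ⟨_, fun x y => μ x * ν y, ⟨fun x y => mul_nonneg (hμ x) (hν y), fun x => ?_, fun y => ?_⟩, rfl⟩
    · rw [← mul_sum, hν1, mul_one]
    · rw [← sum_mul, hμ1, one_mul]
  · rintro v ⟨c, hc, rfl⟩
    exact h c hc

theorem coupling_total {S : Type*} [Fintype S] {c : S → S → ℝ} {μ ν : S → ℝ}
    (hc : IsCoupling c μ ν) (hμ1 : ∑ x, μ x = 1) : ∑ x, ∑ y, c x y = 1 := by
  simp only [hc.2.1, hμ1]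

theorem kant_lip {S : Type*} [Fintype S] {m₁ m₂ : S → S → ℝ} (hm : ∀ x y, 0 ≤ m₁ x y) {μ ν : S → ℝ}
    (hμ : ∀ x, 0 ≤ μ x) (hν : ∀ x, 0 ≤ ν x) (hμ1 : ∑ x, μ x = 1) (hν1 : ∑ x, ν x = 1) {d : ℝ}
    (h : ∀ x y, m₁ x y ≤ m₂ x y + d) : kantorovich m₁ μ ν ≤ kantorovich m₂ μ ν + d := by
  rw [← sub_le_iff_le_add]
  refine le_kant hμ hν hμ1 hν1 fun c hc => ?_
  rw [sub_le_iff_le_add]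
  refine (kant_le hm hc).trans ?_
  have : d = ∑ x, ∑ y, c x y * d := by
    simp only [← sum_mul]
    rw [coupling_total hc hμ1, one_mul]
  conv_rhs => rw [this]
  simp only [← sum_add_distrib, ← mul_add]
  exact sum_le_sum fun x _ => sum_le_sum fun y _ => mul_le_mul_of_nonneg_left (h x y) (hc.1 x y)

theorem kant_nonneg {S : Type*} [Fintype S] {m : S → S → ℝ} (hm : ∀ x y, 0 ≤ m x y) {μ ν : S → ℝ} :
    0 ≤ kantorovich m μ ν := by
  apply Real.sInf_nonneg
  rintro v ⟨c, hc, rfl⟩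
  exact sum_nonneg fun x _ => sum_nonneg fun y _ => mul_nonneg (hc.1 x y) (hm x y)

theorem kant_le_one {S : Type*} [Fintype S] {m : S → S → ℝ} (hm : ∀ x y, 0 ≤ m x y)
    (hm1 : ∀ x y, m x y ≤ 1) {μ ν : S → ℝ}
    (hμ : ∀ x, 0 ≤ μ x) (hν : ∀ x, 0 ≤ ν x) (hμ1 : ∑ x, μ x = 1) (hν1 : ∑ x, ν x = 1) :
    kantorovich m μ ν ≤ 1 := by
  have hc : IsCoupling (fun x y => μ x * ν y) μ ν := by
    refine ⟨fun x y => mul_nonneg (hμ x) (hν y), fun x => ?_, fun y => ?_⟩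
    · rw [← mul_sum, hν1, mul_one]
    · rw [← sum_mul, hμ1, one_mul]
  refine (kant_le hm hc).trans ?_
  rw [← coupling_total hc hμ1]
  exact sum_le_sum fun x _ => sum_le_sum fun y _ => mul_le_of_le_one_right (hc.1 x y) (hm1 x y)

theorem kant_self {S : Type*} [Fintype S] {m : S → S → ℝ} (hm : ∀ x y, 0 ≤ m x y)
    (hm0 : ∀ x, m x x = 0) {μ : S → ℝ} (hμ : ∀ x, 0 ≤ μ x) : kantorovich m μ μ = 0 := by
  classical
  refine le_antisymm ?_ (kant_nonneg hm)
  have hc : IsCoupling (fun x y => if x = y then μ x else 0) μ μ := by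
    refine ⟨fun x y => ?_, fun x => ?_, fun y => ?_⟩
    · dsimp only
      split_ifs
      exacts [hμ x, le_rfl]
    · simp
    · simp
  refine (kant_le hm hc).trans (le_of_eq ?_)
  refine sum_eq_zero fun x _ => sum_eq_zero fun y _ => ?_
  by_cases h : x = y
  · subst h; simp [hm0]
  · simp [h]

theorem kant_symm {S : Type*} [Fintype S] {m : S → S → ℝ}
    (hs : ∀ x y, m x y = m y x) (μ ν : S → ℝ) : kantorovich m μ ν = kantorovich m ν μ := by
  unfold kantorovich
  congr 1
  have key : ∀ μ ν : S → ℝ, ∀ v, (∃ c : S → S → ℝ, IsCoupling c μ ν ∧ v = ∑ x, ∑ y, c x y * m x y) →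
      (∃ c : S → S → ℝ, IsCoupling c ν μ ∧ v = ∑ x, ∑ y, c x y * m x y) := by
    rintro μ ν v ⟨c, hc, rfl⟩
    refine ⟨fun x y => c y x, ⟨fun x y => hc.1 y x, hc.2.2, hc.2.1⟩, ?_⟩
    rw [sum_comm]
    exact sum_congr rfl fun x _ => sum_congr rfl fun y _ => by rw [hs]
  ext v
  exact ⟨key μ ν v, key ν μ v⟩

theorem kant_triangle {S : Type*} [Fintype S] {m : S → S → ℝ} (hm : ∀ x y, 0 ≤ m x y)
    (ht : ∀ x y z, m x z ≤ m x y + m y z) {μ ν ρ : S → ℝ}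
    (hμ : ∀ x, 0 ≤ μ x) (hν : ∀ x, 0 ≤ ν x) (hρ : ∀ x, 0 ≤ ρ x)
    (hμ1 : ∑ x, μ x = 1) (hν1 : ∑ x, ν x = 1) (hρ1 : ∑ x, ρ x = 1) :
    kantorovich m μ ρ ≤ kantorovich m μ ν + kantorovich m ν ρ := by
  rw [← sub_le_iff_le_add]
  refine le_kant hμ hν hμ1 hν1 fun c hc => ?_
  rw [sub_le_iff_le_add, ← sub_le_iff_le_add']
  refine le_kant hν hρ hν1 hρ1 fun e he => ?_
  rw [sub_le_iff_le_add']
  have c0 : ∀ x y, ν y = 0 → c x y = 0 := fun x y h => by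
    have := hc.2.2 y
    rw [h, sum_eq_zero_iff_of_nonneg (fun x _ => hc.1 x y)] at this
    exact this x (mem_univ x)
  have e0 : ∀ y z, ν y = 0 → e y z = 0 := fun y z h => by
    have := he.2.1 y
    rw [h, sum_eq_zero_iff_of_nonneg (fun x _ => he.1 y x)] at this
    exact this z (mem_univ z)
  have s1 : ∀ x y, ∑ z, c x y * e y z / ν y = c x y := fun x y => by
    rw [← sum_div, ← mul_sum, he.2.1]
    by_cases h : ν y = 0
    · simp [c0 x y h]
    · field_simp
  have s2 : ∀ y z, ∑ x, c x y * e y z / ν y = e y z := fun y z => by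
    rw [← sum_div, ← sum_mul, hc.2.2]
    by_cases h : ν y = 0
    · simp [e0 y z h]
    · field_simp
  have hg : ∀ x y z, 0 ≤ c x y * e y z / ν y := fun x y z =>
    div_nonneg (mul_nonneg (hc.1 x y) (he.1 y z)) (hν y)
  have hk : IsCoupling (fun x z => ∑ y, c x y * e y z / ν y) μ ρ := by
    refine ⟨fun x z => sum_nonneg fun y _ => hg x y z, fun x => ?_, fun z => ?_⟩
    · rw [sum_comm]; simp only [s1, hc.2.1]
    · rw [sum_comm]; simp only [s2, he.2.2]
  refine (kant_le hm hk).trans ?_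
  have h1 : ∑ x, ∑ y, c x y * m x y = ∑ x, ∑ z, ∑ y, c x y * e y z / ν y * m x y := by
    refine sum_congr rfl fun x _ => ?_
    rw [sum_comm]
    refine sum_congr rfl fun y _ => ?_
    rw [← sum_mul, s1]
  have h2 : ∑ y, ∑ z, e y z * m y z = ∑ x, ∑ z, ∑ y, c x y * e y z / ν y * m y z := by
    rw [sum_comm]
    conv_rhs => rw [sum_comm]
    refine sum_congr rfl fun z _ => ?_
    rw [sum_comm]
    refine sum_congr rfl fun y _ => ?_
    rw [← sum_mul, s2]
  rw [h1, h2]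
  simp only [← sum_add_distrib, ← mul_add, sum_mul]
  exact sum_le_sum fun x _ => sum_le_sum fun z _ => sum_le_sum fun y _ =>
    mul_le_mul_of_nonneg_left (ht x y z) (hg x y z)

theorem le_supDist {S : Type*} [Fintype S] (m₁ m₂ : S → S → ℝ) (x y : S) :
    |m₁ x y - m₂ x y| ≤ supDist m₁ m₂ :=
  le_ciSup (f := fun p : S × S => |m₁ p.1 p.2 - m₂ p.1 p.2|) (Set.finite_range _).bddAbove (x, y)

theorem TK_le {S A : Type*} [Fintype S] [Fintype A] [Nonempty A]
    (R : S → A → ℝ) (τ : A → S → S → ℝ)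
    (hτpos : ∀ a s s', 0 ≤ τ a s s') (hτsum : ∀ a s, ∑ s', τ a s s' = 1)
    (γ : ℝ) (hγ0 : 0 < γ) {m₁ m₂ : S → S → ℝ} (hm : ∀ x y, 0 ≤ m₁ x y) {d : ℝ}
    (h : ∀ x y, |m₁ x y - m₂ x y| ≤ d) (x y : S) :
    TK R τ γ m₁ x y ≤ TK R τ γ m₂ x y + γ * d := by
  unfold TK
  refine sup'_le _ _ fun a _ => ?_
  have h1 := le_sup' (fun a => (1 - γ) * |R x a - R y a| + γ * kantorovich m₂ (τ a x) (τ a y))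
    (mem_univ a)
  have h2 := kant_lip hm (hτpos a x) (hτpos a y) (hτsum a x) (hτsum a y) (m₂ := m₂) (d := d)
    (fun x y => by linarith [(abs_le.1 (h x y)).2])
  have h3 := mul_le_mul_of_nonneg_left h2 hγ0.le
  linarith

theorem TK_abs {S A : Type*} [Fintype S] [Fintype A] [Nonempty A]
    (R : S → A → ℝ) (τ : A → S → S → ℝ)
    (hτpos : ∀ a s s', 0 ≤ τ a s s') (hτsum : ∀ a s, ∑ s', τ a s s' = 1)
    (γ : ℝ) (hγ0 : 0 < γ) {m₁ m₂ : S → S → ℝ} (hm₁ : ∀ x y, 0 ≤ m₁ x y)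
    (hm₂ : ∀ x y, 0 ≤ m₂ x y) {d : ℝ}
    (h : ∀ x y, |m₁ x y - m₂ x y| ≤ d) (x y : S) :
    |TK R τ γ m₁ x y - TK R τ γ m₂ x y| ≤ γ * d := by
  have h1 := TK_le R τ hτpos hτsum γ hγ0 hm₁ h x y
  have h2 := TK_le R τ hτpos hτsum γ hγ0 hm₂ (fun x y => by rw [abs_sub_comm]; exact h x y) x y
  rw [abs_le]
  constructor <;> linarith

theorem TK_maps {S A : Type*} [Fintype S] [Fintype A] [Nonempty A]
    (R : S → A → ℝ) (hR : ∀ s a, 0 ≤ R s a ∧ R s a ≤ 1) (τ : A → S → S → ℝ)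
    (hτpos : ∀ a s s', 0 ≤ τ a s s') (hτsum : ∀ a s, ∑ s', τ a s s' = 1)
    (γ : ℝ) (hγ0 : 0 < γ) (hγ1 : γ < 1) {m : S → S → ℝ} (hm : IsBddPseudometric m) :
    IsBddPseudometric (TK R τ γ m) := by
  obtain ⟨p0, p1, pz, ps, pt⟩ := hm
  have g1 : 0 ≤ 1 - γ := by linarith
  have hle : ∀ x y a, (1 - γ) * |R x a - R y a| + γ * kantorovich m (τ a x) (τ a y)
      ≤ TK R τ γ m x y := fun x y a =>
    le_sup' (fun a => (1 - γ) * |R x a - R y a| + γ * kantorovich m (τ a x) (τ a y)) (mem_univ a)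
  refine ⟨fun x y => ?_, fun x y => ?_, fun x => ?_, fun x y => ?_, fun x y z => ?_⟩
  · obtain ⟨a⟩ := ‹Nonempty A›
    exact (add_nonneg (mul_nonneg g1 (abs_nonneg _))
      (mul_nonneg hγ0.le (kant_nonneg p0))).trans (hle x y a)
  · refine sup'_le _ _ fun a _ => ?_
    have h1 : |R x a - R y a| ≤ 1 := by
      rw [abs_le]
      constructor <;> linarith [hR x a, hR y a, (hR x a).1, (hR x a).2, (hR y a).1, (hR y a).2]
    have h2 := kant_le_one p0 p1 (hτpos a x) (hτpos a y) (hτsum a x) (hτsum a y)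
    nlinarith
  · simp [TK, kant_self p0 pz (hτpos _ x)]
  · unfold TK
    congr 1
    funext a
    rw [abs_sub_comm, kant_symm ps]
  · refine sup'_le _ _ fun a _ => ?_
    have h1 := hle x y a
    have h2 := hle y z a
    have h3 := mul_le_mul_of_nonneg_left (abs_sub_le (R x a) (R y a) (R z a)) g1
    have h4 := mul_le_mul_of_nonneg_left (kant_triangle p0 pt (hτpos a x) (hτpos a y) (hτpos a z)
      (hτsum a x) (hτsum a y) (hτsum a z)) hγ0.le
    linarith

theorem isClosed_bddPseudometric {S : Type*} [Fintype S] :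
    IsClosed {m : S → S → ℝ | IsBddPseudometric m} := by
  have e : ∀ x y : S, Continuous fun m : S → S → ℝ => m x y := fun x y => by fun_prop
  simp only [IsBddPseudometric, Set.ofPred_and, Set.ofPred_forall]
  refine IsClosed.inter ?_ (IsClosed.inter ?_ (IsClosed.inter ?_ (IsClosed.inter ?_ ?_)))
  · exact isClosed_iInter fun x => isClosed_iInter fun y => isClosed_le continuous_const (e x y)
  · exact isClosed_iInter fun x => isClosed_iInter fun y => isClosed_le (e x y) continuous_const
  · exact isClosed_iInter fun x => isClosed_eq (e x x) continuous_const
  · exact isClosed_iInter fun x => isClosed_iInter fun y => isClosed_eq (e x y) (e y x)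
  · exact isClosed_iInter fun x => isClosed_iInter fun y => isClosed_iInter fun z =>
      isClosed_le (e x z) ((e x y).add (e y z))

/-- The operator `T_K` is a `γ`-contraction on the space of 1-bounded pseudometrics with
the sup metric `Δ`, and hence has a unique fixed point (the bisimulation metric). -/
theorem stmt_9
    {S A : Type*} [Fintype S] [Fintype A] [Nonempty S] [Nonempty A]
    (R : S → A → ℝ) (hR : ∀ s a, 0 ≤ R s a ∧ R s a ≤ 1)
    (τ : A → S → S → ℝ)
    (hτpos : ∀ a s s', 0 ≤ τ a s s') (hτsum : ∀ a s, ∑ s', τ a s s' = 1)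
    (γ : ℝ) (hγ0 : 0 < γ) (hγ1 : γ < 1) :
    (∀ m₁ m₂ : S → S → ℝ, IsBddPseudometric m₁ → IsBddPseudometric m₂ →
        supDist (TK R τ γ m₁) (TK R τ γ m₂) ≤ γ * supDist m₁ m₂)
      ∧ ∃! m : S → S → ℝ, IsBddPseudometric m ∧ TK R τ γ m = m := by
  have hcon : ∀ m₁ m₂ : S → S → ℝ, IsBddPseudometric m₁ → IsBddPseudometric m₂ →
        supDist (TK R τ γ m₁) (TK R τ γ m₂) ≤ γ * supDist m₁ m₂ := fun m₁ m₂ h₁ h₂ =>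
    ciSup_le fun p => TK_abs R τ hτpos hτsum γ hγ0 h₁.1 h₂.1 (le_supDist m₁ m₂) p.1 p.2
  refine ⟨hcon, ?_⟩
  have hmaps : Set.MapsTo (TK R τ γ) {m : S → S → ℝ | IsBddPseudometric m}
      {m : S → S → ℝ | IsBddPseudometric m} :=
    fun m hm => TK_maps R hR τ hτpos hτsum γ hγ0 hγ1 hm
  have hctr : ContractingWith ⟨γ, hγ0.le⟩ (hmaps.restrict (TK R τ γ) _ _) := by
    refine ⟨by exact_mod_cast hγ1, LipschitzWith.of_dist_le_mul ?_⟩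
    rintro ⟨m₁, h₁⟩ ⟨m₂, h₂⟩
    change dist (TK R τ γ m₁) (TK R τ γ m₂) ≤ γ * dist m₁ m₂
    have h0 : 0 ≤ γ * dist m₁ m₂ := mul_nonneg hγ0.le dist_nonneg
    refine (dist_pi_le_iff h0).2 fun x => (dist_pi_le_iff h0).2 fun y => ?_
    rw [Real.dist_eq]
    refine TK_abs R τ hτpos hτsum γ hγ0 h₁.1 h₂.1 (fun x y => ?_) x y
    rw [← Real.dist_eq]
    exact (dist_le_pi_dist (m₁ x) (m₂ x) y).trans (dist_le_pi_dist m₁ m₂ x)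
  have hz : (fun _ _ => 0 : S → S → ℝ) ∈ {m : S → S → ℝ | IsBddPseudometric m} := by
    refine ⟨?_, ?_, ?_, ?_, ?_⟩ <;> intros <;> norm_num
  obtain ⟨m, hm, hfix, -⟩ := ContractingWith.exists_fixedPoint'
    isClosed_bddPseudometric.isComplete hmaps hctr hz (edist_ne_top _ _)
  refine ⟨m, ⟨hm, hfix⟩, ?_⟩
  rintro m' ⟨hm', hfix'⟩
  have h := hcon m' m hm' hm
  rw [hfix', show TK R τ γ m = m from hfix] at h
  have h0 : supDist m' m ≤ 0 := by nlinarith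
  funext x y
  have := abs_nonpos_iff.1 ((le_supDist m' m x y).trans h0)
  linarith
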